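/- Let (R,m) be a non-Gorenstein Noetherian local ring with m³ = (0) and m² ≠ (0), which possesses a nonfree finitely generated module of G-dimension zero. Then m² = (0 :_R m), i.e., the socle of R equals m². -/

import Mathlib

open CategoryTheory

noncomputable abbrev ExtGrp (R : Type) [CommRing R] (M N : Type) [AddCommGroup M] [Module R M]
    [AddCommGroup N] [Module R N] (i : ℕ) : Type :=
  ((Ext R (ModuleCat R) i).obj (Opposite.op (ModuleCat.of R M))).obj (ModuleCat.of R N)

/-- G-dimension zero. -/
def GDimZero (R : Type) [CommRing R] (M : Type) [AddCommGroup M] [Module R M] : Prop :=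
  Function.Bijective (Module.Dual.eval R M) ∧
  (∀ i : ℕ, 0 < i → Subsingleton (ExtGrp R M R i)) ∧
  (∀ i : ℕ, 0 < i → Subsingleton (ExtGrp R (Module.Dual R M) R i))

/-- finite self-injective dimension -/
def HasFiniteSelfInjDim (R : Type) [CommRing R] : Prop :=
  ∃ n : ℕ, ∀ (N : ModuleCat R) (i : ℕ), n < i →
    Subsingleton (((Ext R (ModuleCat R) i).obj (Opposite.op N)).obj (ModuleCat.of R R))

/-- Gorenstein local ring -/
def IsGorensteinLocalRing (R : Type) [CommRing R] : Prop :=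
  IsNoetherianRing R ∧ IsLocalRing R ∧ HasFiniteSelfInjDim R

/-- length of a module, as Krull dimension of its submodule lattice -/
noncomputable def mlength (R : Type) [CommRing R] (M : Type) [AddCommGroup M] [Module R M] :
    WithBot ℕ∞ :=
  Order.krullDim (Submodule R M)

/-!
If the socle contains some `x ∉ 𝔪²`, then `Ext¹(k, R) = 0`, which over an Artinian local ring makes
`R` self-injective. Indeed, since `M` is not free, some `e ∉ 𝔪M` is sent into `𝔪` by every
functional, so `x • e = 0` because `M` is torsionless. In a minimal cover `π : F → M`, a lift `p`
of `e` then gives `x • p ∈ ker π ⊆ 𝔪F`. This element is killed by `𝔪`, and it lies outside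
`𝔪 (ker π) ⊆ 𝔪²F` because `p` has a unit coordinate. So it spans a direct summand of `ker π`
isomorphic to `k`, and `Ext¹(k, R)` is a summand of `Ext¹(ker π, R) = Ext²(M, R) = 0`.
-/

universe w u v v₁

section Ext

variable {R : Type u} [CommRing R] {C : Type v} [Category.{w} C] [Abelian C] [Linear R C]

lemma subsingleton_derivedExt_succ_iff_of_projectiveResolution [EnoughProjectives C] {X : C}
    (P : ProjectiveResolution X) (Y : C) (n : ℕ) :
    Subsingleton (((Ext R C (n + 1)).obj (.op X)).obj Y) ↔
      ∀ f : P.complex.X (n + 1) ⟶ Y, P.complex.d (n + 2) (n + 1) ≫ f = 0 →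
        ∃ g : P.complex.X n ⟶ Y, P.complex.d (n + 1) n ≫ g = f := by
  rw [← ModuleCat.isZero_iff_subsingleton, (P.isoExt (n + 1) Y).isZero_iff,
    ← HomologicalComplex.exactAt_iff_isZero_homology,
    HomologicalComplex.exactAt_iff' _ n (n + 1) (n + 2) (by simp) (by simp),
    ShortComplex.moduleCat_exact_iff]
  rfl

lemma subsingleton_abelianExt_succ_iff_of_projectiveResolution [HasExt.{v₁} C] {X : C}
    (P : ProjectiveResolution X) (Y : C) (n : ℕ) :
    Subsingleton (Abelian.Ext X Y (n + 1)) ↔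
      ∀ f : P.complex.X (n + 1) ⟶ Y, P.complex.d (n + 2) (n + 1) ≫ f = 0 →
        ∃ g : P.complex.X n ⟶ Y, P.complex.d (n + 1) n ≫ g = f := by
  constructor
  · intro h f hf
    exact (P.extMk_eq_zero_iff f (n + 2) rfl hf n rfl).1 (Subsingleton.elim _ _)
  · intro h
    refine subsingleton_of_forall_eq 0 fun a ↦ ?_
    obtain ⟨f, hf, rfl⟩ := P.extMk_surjective a (n + 2) rfl
    exact (P.extMk_eq_zero_iff f (n + 2) rfl hf n rfl).2 (h f hf)

variable (R) in
lemma subsingleton_derivedExt_succ_iff_abelianExt [EnoughProjectives C] [HasExt.{v₁} C]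
    (X Y : C) (n : ℕ) :
    Subsingleton (((Ext R C (n + 1)).obj (.op X)).obj Y) ↔
      Subsingleton (Abelian.Ext X Y (n + 1)) :=
  (subsingleton_derivedExt_succ_iff_of_projectiveResolution (projectiveResolution X) Y n).trans
    (subsingleton_abelianExt_succ_iff_of_projectiveResolution (projectiveResolution X) Y n).symm

end Ext

section ExtSubsingleton

variable {C : Type v} [Category.{w} C] [Abelian C] [HasExt.{v₁} C] {Y : C} {n : ℕ}

lemma subsingleton_ext_of_retract {X X' : C} (h : Retract X X')
    (hX' : Subsingleton (Abelian.Ext X' Y n)) : Subsingleton (Abelian.Ext X Y n) := by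
  refine subsingleton_of_forall_eq 0 fun a ↦ ?_
  calc
    a = (Abelian.Ext.mk₀ h.i).comp ((Abelian.Ext.mk₀ h.r).comp a (zero_add n)) (zero_add n) := by
      rw [Abelian.Ext.mk₀_comp_mk₀_assoc, h.retract, Abelian.Ext.mk₀_id_comp]
    _ = 0 := by rw [Subsingleton.elim ((Abelian.Ext.mk₀ h.r).comp a _) 0, Abelian.Ext.comp_zero]

variable {S : ShortComplex C}

lemma subsingleton_ext_X₂ (hS : S.ShortExact) (h₁ : Subsingleton (Abelian.Ext S.X₁ Y n))
    (h₃ : Subsingleton (Abelian.Ext S.X₃ Y n)) : Subsingleton (Abelian.Ext S.X₂ Y n) := by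
  refine subsingleton_of_forall_eq 0 fun a ↦ ?_
  obtain ⟨b, rfl⟩ := Abelian.Ext.contravariant_sequence_exact₂ hS Y a (Subsingleton.elim _ _)
  rw [Subsingleton.elim b 0, Abelian.Ext.comp_zero]

lemma subsingleton_ext_X₁_of_projective_X₂ (hS : S.ShortExact) [Projective S.X₂]
    (h₃ : Subsingleton (Abelian.Ext S.X₃ Y (n + 2))) :
    Subsingleton (Abelian.Ext S.X₁ Y (n + 1)) := by
  refine subsingleton_of_forall_eq 0 fun a ↦ ?_
  obtain ⟨b, rfl⟩ := Abelian.Ext.contravariant_sequence_exact₁ hS Y a (add_comm 1 _)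
    (Subsingleton.elim _ _)
  rw [Abelian.Ext.eq_zero_of_projective b, Abelian.Ext.comp_zero]

end ExtSubsingleton

section SelfInjective

variable {R : Type u} [CommRing R]

lemma subsingleton_ext_of_forall_quotient_prime [IsNoetherianRing R] {Y : ModuleCat.{u} R} {n : ℕ}
    (h : ∀ p : PrimeSpectrum R, Subsingleton (Abelian.Ext (ModuleCat.of R (R ⧸ p.asIdeal)) Y n))
    (M : Type u) [AddCommGroup M] [Module R M] [hM : Module.Finite R M] :
    Subsingleton (Abelian.Ext (ModuleCat.of R M) Y n) := by
  induction hM using IsNoetherianRing.induction_on_isQuotientEquivQuotientPrime R with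
  | subsingleton N =>
    have hN : Limits.IsZero (ModuleCat.of R N) := ModuleCat.isZero_of_subsingleton _
    refine subsingleton_of_forall_eq 0 fun a ↦ ?_
    rw [← Abelian.Ext.mk₀_id_comp a, hN.eq_of_src (𝟙 _) 0, Abelian.Ext.mk₀_zero,
      Abelian.Ext.zero_comp]
  | quotient N p e => exact subsingleton_ext_of_retract (Retract.ofIso e.toModuleIso) (h p)
  | exact N₁ N₂ N₃ f g hf hg hfg h₁ h₃ =>
    exact subsingleton_ext_X₂ (ModuleCat.shortComplex_shortExact
      (ModuleCat.shortComplexOfCompEqZero f g hfg.linearMap_comp_eq_zero) hfg hf hg) h₁ h₃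

lemma baer_of_forall_subsingleton_ext_quotient {Q : Type u} [AddCommGroup Q] [Module R Q]
    (h : ∀ I : Ideal R,
      Subsingleton (Abelian.Ext (ModuleCat.of R (R ⧸ I)) (ModuleCat.of R Q) 1)) :
    Module.Baer R Q := by
  intro I g
  have hexact := LinearMap.exact_subtype_mkQ I
  have hS := ModuleCat.shortComplex_shortExact
    (ModuleCat.shortComplexOfCompEqZero I.subtype I.mkQ hexact.linearMap_comp_eq_zero)
    hexact I.injective_subtype I.mkQ_surjective
  obtain ⟨b, hb⟩ := Abelian.Ext.contravariant_sequence_exact₁ hS (ModuleCat.of R Q)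
    (Abelian.Ext.mk₀ (ModuleCat.ofHom g)) rfl ((h I).elim _ _)
  obtain ⟨b, rfl⟩ := (Abelian.Ext.mk₀_bijective _ _).2 b
  rw [Abelian.Ext.mk₀_comp_mk₀] at hb
  have hbg := (Abelian.Ext.mk₀_bijective _ _).1 hb
  exact ⟨b.hom, fun x hx ↦ congr($(hbg).hom ⟨x, hx⟩)⟩

lemma injective_of_subsingleton_ext_residueField [IsArtinianRing R] [IsLocalRing R] {Q : Type u}
    [AddCommGroup Q] [Module R Q]
    (h : Subsingleton (Abelian.Ext (ModuleCat.of R (R ⧸ IsLocalRing.maximalIdeal R))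
      (ModuleCat.of R Q) 1)) : Module.Injective R Q := by
  refine (baer_of_forall_subsingleton_ext_quotient fun I ↦
    subsingleton_ext_of_forall_quotient_prime (fun p ↦ ?_) _).injective
  rwa [IsLocalRing.eq_maximalIdeal (IsArtinianRing.isMaximal_of_isPrime p.asIdeal)]

end SelfInjective

lemma isGorensteinLocalRing_of_injective {R : Type} [CommRing R] [IsNoetherianRing R]
    [IsLocalRing R] (h : Module.Injective R R) : IsGorensteinLocalRing R := by
  refine ⟨inferInstance, inferInstance, 0, fun N i hi ↦ ?_⟩
  obtain ⟨n, rfl⟩ := Nat.exists_eq_add_one.2 hi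
  have : Injective (ModuleCat.of R R) := Module.injective_object_of_injective_module R R
  rw [subsingleton_derivedExt_succ_iff_abelianExt]
  exact Abelian.Ext.subsingleton_of_injective _ _ n

open IsLocalRing

section IdealSmulTop

variable {R : Type u} [CommRing R] {M : Type v} [AddCommGroup M] [Module R M]

lemma dual_apply_mem_of_mem_smul_top {I : Ideal R} {y : M} (hy : y ∈ I • (⊤ : Submodule R M))
    (f : Module.Dual R M) : f y ∈ I := by
  simpa using Submodule.smul_top_le_comap_smul_top I f hy

lemma finsupp_mem_ideal_smul_top_iff {ι : Type*} {I : Ideal R} {v : ι →₀ R} :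
    v ∈ I • (⊤ : Submodule R (ι →₀ R)) ↔ ∀ i, v i ∈ I := by
  refine ⟨fun hv i ↦ dual_apply_mem_of_mem_smul_top hv (Finsupp.lapply i), fun hv ↦ ?_⟩
  rw [← Finsupp.basisSingleOne.span_eq, Submodule.mem_ideal_smul_span_iff_exists_sum]
  exact ⟨v, hv, by simp⟩

lemma one_tmul_quotient_eq_zero_iff {I : Ideal R} {y : M} :
    TensorProduct.tmul R (1 : R ⧸ I) y = 0 ↔ y ∈ I • (⊤ : Submodule R M) := by
  rw [← (TensorProduct.quotTensorEquivQuotSMul M I).map_eq_zero_iff,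
    TensorProduct.quotTensorEquivQuotSMul_mk_one_tmul, Submodule.Quotient.mk_eq_zero]

lemma exists_retraction_quotient_of_notMem_smul_top {I : Ideal R} [I.IsMaximal] {y : M}
    (hIy : ∀ a ∈ I, a • y = 0) (hy : y ∉ I • (⊤ : Submodule R M)) :
    ∃ (s : (R ⧸ I) →ₗ[R] M) (r : M →ₗ[R] (R ⧸ I)), r ∘ₗ s = LinearMap.id := by
  let := Ideal.Quotient.field I
  obtain ⟨φ, hφ⟩ := Module.Projective.exists_dual_eq_one (R ⧸ I)
    (x := TensorProduct.tmul R (1 : R ⧸ I) y) (by rwa [ne_eq, one_tmul_quotient_eq_zero_iff])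
  refine ⟨I.liftQ (LinearMap.toSpanSingleton R M y) hIy,
    φ.restrictScalars R ∘ₗ TensorProduct.mk R (R ⧸ I) M 1, ?_⟩
  ext
  change φ (TensorProduct.tmul R 1 ((1 : R) • y)) = 1
  rwa [one_smul]

end IdealSmulTop

section LocalRing

variable {R : Type u} [CommRing R] [IsLocalRing R] {M : Type v} [AddCommGroup M] [Module R M]

lemma exists_leftInverse_of_comap_maximalIdeal_smul_top_le {N : Type v₁} [AddCommGroup N]
    [Module R N] [Module.Finite R M] [Module.Finite R N] [Module.Free R N] {g : M →ₗ[R] N}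
    (hg : (maximalIdeal R • ⊤ : Submodule R N).comap g ≤ maximalIdeal R • ⊤) :
    ∃ l : N →ₗ[R] M, l ∘ₗ g = LinearMap.id := by
  rw [split_injective_iff_lTensor_residueField_injective, injective_iff_map_eq_zero]
  intro t ht
  obtain ⟨y, rfl⟩ := TensorProduct.mk_surjective R M (ResidueField R) Ideal.Quotient.mk_surjective t
  exact one_tmul_quotient_eq_zero_iff.2 (hg (one_tmul_quotient_eq_zero_iff.1 ht))

lemma free_of_forall_dual_apply_mem_maximalIdeal [Module.Finite R M]
    [Module.Finite R (Module.Dual R M)]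
    (h : ∀ y : M, (∀ f : Module.Dual R M, f y ∈ maximalIdeal R) →
      y ∈ maximalIdeal R • (⊤ : Submodule R M)) : Module.Free R M := by
  obtain ⟨n, s, hs⟩ := Module.Finite.exists_fin (R := R) (M := Module.Dual R M)
  obtain ⟨l, hl⟩ : ∃ l : (Fin n → R) →ₗ[R] M, l ∘ₗ LinearMap.pi s = LinearMap.id := by
    refine exists_leftInverse_of_comap_maximalIdeal_smul_top_le fun y hy ↦ h y fun f ↦ ?_
    have hspan : Submodule.span R (Set.range s) ≤
        Submodule.comap (Module.Dual.eval R M y) (maximalIdeal R) := by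
      rw [Submodule.span_le, Set.range_subset_iff]
      exact fun i ↦ dual_apply_mem_of_mem_smul_top hy (LinearMap.proj i)
    exact hspan (hs ▸ Submodule.mem_top)
  have := Module.Projective.of_split _ l hl
  exact Module.free_of_flat_of_isLocalRing

lemma exists_smul_eq_zero_of_not_free [Module.Finite R M] [Module.Finite R (Module.Dual R M)]
    (hM : Function.Injective (Module.Dual.eval R M)) (hfree : ¬ Module.Free R M) {x : R}
    (hx : x ∈ (maximalIdeal R).annihilator) :
    ∃ e : M, e ∉ maximalIdeal R • (⊤ : Submodule R M) ∧ x • e = 0 := by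
  obtain ⟨e, he, heM⟩ : ∃ e : M, (∀ f : Module.Dual R M, f e ∈ maximalIdeal R) ∧
      e ∉ maximalIdeal R • (⊤ : Submodule R M) := by
    by_contra! h
    exact hfree (free_of_forall_dual_apply_mem_maximalIdeal h)
  refine ⟨e, heM, hM ?_⟩
  ext f
  simpa using Submodule.mem_annihilator.1 hx _ (he f)

variable (R M) in
lemma exists_surjective_ker_le_maximalIdeal_smul_top [Module.Finite R M] :
    ∃ (n : ℕ) (π : (Fin n →₀ R) →ₗ[R] M), Function.Surjective π ∧
      LinearMap.ker π ≤ maximalIdeal R • ⊤ := by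
  let b := Module.finBasis (ResidueField R) (TensorProduct R (ResidueField R) M)
  choose f hf using fun i ↦
    TensorProduct.mk_surjective R M (ResidueField R) Ideal.Quotient.mk_surjective (b i)
  refine ⟨_, Finsupp.linearCombination R f, ?_, fun v hv ↦ ?_⟩
  · rw [← LinearMap.range_eq_top, Finsupp.range_linearCombination]
    exact span_eq_top_of_tmul_eq_basis f b hf
  · have hrepr : b.repr.toLinearMap.restrictScalars R ∘ₗ TensorProduct.mk R (ResidueField R) M 1 ∘ₗ
        Finsupp.linearCombination R f =
          Finsupp.mapRange.linearMap (Algebra.linearMap R (ResidueField R)) := by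
      ext i : 2
      simp [hf]
    refine finsupp_mem_ideal_smul_top_iff.2 fun i ↦ ?_
    have hvi := DFunLike.congr_fun (LinearMap.congr_fun hrepr v) i
    simpa [LinearMap.mem_ker.1 hv] using hvi.symm

lemma smul_notMem_maximalIdeal_smul {ι : Type*} {N : Submodule R (ι →₀ R)}
    (hN : N ≤ maximalIdeal R • ⊤) {x : R} (hx : x ∉ maximalIdeal R ^ 2) {p : ι →₀ R}
    (hp : p ∉ maximalIdeal R • (⊤ : Submodule R (ι →₀ R))) : x • p ∉ maximalIdeal R • N := by
  intro h
  obtain ⟨i, hi⟩ : ∃ i, p i ∉ maximalIdeal R := by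
    simpa [finsupp_mem_ideal_smul_top_iff] using hp
  have hxp : x • p ∈ maximalIdeal R ^ 2 • (⊤ : Submodule R (ι →₀ R)) := by
    rw [sq, mul_smul]
    exact smul_mono_right _ hN h
  have hu : IsUnit (p i) := by simpa using hi
  exact hx ((Ideal.mul_unit_mem_iff_mem _ hu).1 (finsupp_mem_ideal_smul_top_iff.1 hxp i))

end LocalRing

section Socle

variable {R : Type u} [CommRing R] {Y : ModuleCat.{u} R} {n : ℕ}

lemma subsingleton_ext_quotient_of_notMem_smul_top {N : Type u} [AddCommGroup N] [Module R N]
    (hext : Subsingleton (Abelian.Ext (ModuleCat.of R N) Y n)) {I : Ideal R} [I.IsMaximal] {y : N}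
    (hIy : ∀ a ∈ I, a • y = 0) (hy : y ∉ I • (⊤ : Submodule R N)) :
    Subsingleton (Abelian.Ext (ModuleCat.of R (R ⧸ I)) Y n) := by
  obtain ⟨s, r, hrs⟩ := exists_retraction_quotient_of_notMem_smul_top hIy hy
  exact subsingleton_ext_of_retract
    ⟨ModuleCat.ofHom s, ModuleCat.ofHom r, ModuleCat.hom_ext hrs⟩ hext

variable [IsLocalRing R] {M : Type u} [AddCommGroup M] [Module R M]

lemma subsingleton_ext_residueField_of_smul_eq_zero [Module.Finite R M]
    (hext : Subsingleton (Abelian.Ext (ModuleCat.of R M) Y (n + 2))) {x : R}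
    (hx : x ∈ (maximalIdeal R).annihilator) (hx2 : x ∉ maximalIdeal R ^ 2) {e : M}
    (he : e ∉ maximalIdeal R • (⊤ : Submodule R M)) (hxe : x • e = 0) :
    Subsingleton (Abelian.Ext (ModuleCat.of R (R ⧸ maximalIdeal R)) Y (n + 1)) := by
  obtain ⟨m, π, hπ, hker⟩ := exists_surjective_ker_le_maximalIdeal_smul_top R M
  have : Projective (ModuleCat.of R (Fin m →₀ R)) :=
    ModuleCat.projective_of_free Finsupp.basisSingleOne
  have hextKer : Subsingleton (Abelian.Ext (ModuleCat.of R (LinearMap.ker π)) Y (n + 1)) :=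
    subsingleton_ext_X₁_of_projective_X₂ (LinearMap.shortExact_shortComplexKer hπ) hext
  obtain ⟨p, rfl⟩ := hπ e
  have hp : p ∉ maximalIdeal R • (⊤ : Submodule R (Fin m →₀ R)) := fun h ↦
    he (Submodule.smul_top_le_comap_smul_top _ π h)
  have hxp : x • p ∈ LinearMap.ker π := by simpa using hxe
  have hmxp (a : R) (ha : a ∈ maximalIdeal R) : a • x • p = 0 := by
    rw [← mul_smul, mul_comm, ← smul_eq_mul, Submodule.mem_annihilator.1 hx a ha, zero_smul]
  refine subsingleton_ext_quotient_of_notMem_smul_top (N := LinearMap.ker π) hextKer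
    (y := ⟨x • p, hxp⟩) (fun a ha ↦ Subtype.ext (hmxp a ha)) ?_
  rw [Submodule.mem_smul_top_iff]
  exact smul_notMem_maximalIdeal_smul hker hx2 hp

lemma annihilator_maximalIdeal_le_sq [IsArtinianRing R] (hR : ¬ Module.Injective R R)
    [Module.Finite R M] (hM : Function.Injective (Module.Dual.eval R M))
    (hext : Subsingleton (Abelian.Ext (ModuleCat.of R M) (ModuleCat.of R R) 2))
    (hfree : ¬ Module.Free R M) : (maximalIdeal R).annihilator ≤ maximalIdeal R ^ 2 := by
  intro x hx
  by_contra hx2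
  obtain ⟨e, he, hxe⟩ := exists_smul_eq_zero_of_not_free hM hfree hx
  exact hR (injective_of_subsingleton_ext_residueField
    (subsingleton_ext_residueField_of_smul_eq_zero hext hx hx2 he hxe))

theorem stmt_4_general [IsNoetherianRing R] (hR : ¬ Module.Injective R R)
    (hm3 : maximalIdeal R ^ 3 = ⊥) [Module.Finite R M]
    (hM : Function.Injective (Module.Dual.eval R M))
    (hext : Subsingleton (Abelian.Ext (ModuleCat.of R M) (ModuleCat.of R R) 2))
    (hfree : ¬ Module.Free R M) :
    (⊥ : Submodule R R).colon (maximalIdeal R) = maximalIdeal R ^ 2 := by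
  have : IsArtinianRing R := (isArtinianRing_iff_isNilpotent_maximalIdeal R).2 ⟨3, hm3⟩
  rw [Submodule.bot_colon]
  refine (annihilator_maximalIdeal_le_sq hR hM hext hfree).antisymm ?_
  rwa [Submodule.le_annihilator_iff, smul_eq_mul, ← pow_succ]

end Socle

/-- the socle of R equals m². -/
theorem stmt_4 (R : Type) [CommRing R] [IsNoetherianRing R] [IsLocalRing R]
    (hng : ¬ IsGorensteinLocalRing R)
    (hm3 : (IsLocalRing.maximalIdeal R) ^ 3 = ⊥)
    (hm2 : (IsLocalRing.maximalIdeal R) ^ 2 ≠ ⊥)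
    (hex : ∃ M : ModuleCat R, Module.Finite R M ∧ GDimZero R M ∧ ¬ Module.Free R M) :
    (⊥ : Submodule R R).colon (IsLocalRing.maximalIdeal R) =
      (IsLocalRing.maximalIdeal R) ^ 2 := by
  obtain ⟨M, _, ⟨hreflexive, hext, -⟩, hfree⟩ := hex
  exact stmt_4_general (mt isGorensteinLocalRing_of_injective hng) hm3 hreflexive.1
    ((subsingleton_derivedExt_succ_iff_abelianExt R _ _ 1).1 (hext 2 two_pos)) hfree
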